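/- Let N ≥ 3 and let K ⊆ ℝ^N be a closed set which satisfies the topological condition (T) and is contained in a rectifiable cone. Then every local energy minimizer u in ℝ^N ∖ K satisfies ∫_{B_1 ∖ K} |∇u(x)|² |x|^{2−N} dx < ∞ (i.e. ∇u is more integrable at the origin than the a priori L² bound suggests). -/

import Mathlib

open MeasureTheory Metric Set Filter
open scoped ENNReal NNReal Topology

noncomputable section

/-- `ℝ^N` as a Euclidean space. -/
abbrev Rn (N : ℕ) := EuclideanSpace ℝ (Fin N)

/-- `u` is locally Lipschitz on the set `s` (neighborhoods taken within `s`). -/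
def LocLipOn (N : ℕ) (u : Rn N → ℝ) (s : Set (Rn N)) : Prop :=
  ∀ x ∈ s, ∃ t ∈ nhdsWithin x s, ∃ C : ℝ≥0, LipschitzOnWith C u t

/-- `u` is a local energy minimizer in `ℝ^N ∖ K`: locally Lipschitz on `Kᶜ`, with finite
local energy, minimizing the Dirichlet energy in every ball among competitors with the
same boundary values. -/
def LocMin (N : ℕ) (K : Set (Rn N)) (u : Rn N → ℝ) : Prop :=
  LocLipOn N u Kᶜ ∧
  (∀ R : ℝ, 0 < R →
    IntegrableOn (fun x => (u x) ^ 2 + ‖gradient u x‖ ^ 2) (ball 0 R \ K) volume) ∧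
  ∀ R : ℝ, 0 < R → ∀ v : Rn N → ℝ, LocLipOn N v Kᶜ →
    IntegrableOn (fun x => ‖gradient v x‖ ^ 2) (ball 0 R \ K) volume →
    (∀ x, x ∉ ball (0 : Rn N) R ∪ K → v x = u x) →
    (∫ x in ball (0 : Rn N) R \ K, ‖gradient u x‖ ^ 2) ≤
      ∫ x in ball (0 : Rn N) R \ K, ‖gradient v x‖ ^ 2

/-- Topological condition (T): for a.e. `r > 0` such that `∂B_r ∖ K` is not connected,
every connected component `U` of `∂B_r ∖ K` admits an open set `D ⊆ B_r ∖ K` with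
`∂D ∖ U ⊆ K`. -/
def CondT (N : ℕ) (K : Set (Rn N)) : Prop :=
  ∀ᵐ r : ℝ ∂volume, 0 < r → ¬ IsConnected (sphere (0 : Rn N) r \ K) →
    ∀ x₀ ∈ sphere (0 : Rn N) r \ K,
      ∃ D : Set (Rn N), IsOpen D ∧ D ⊆ ball (0 : Rn N) r \ K ∧
        frontier D \ connectedComponentIn (sphere (0 : Rn N) r \ K) x₀ ⊆ K

/-- `E` is `k`-rectifiable: up to an `H^k`-null set, `E` is covered by countably many
Lipschitz images of `ℝ^k`. -/
def KRectifiable (N k : ℕ) (E : Set (Rn N)) : Prop :=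
  ∃ f : ℕ → (EuclideanSpace ℝ (Fin k) → Rn N),
    (∀ i, ∃ C : ℝ≥0, LipschitzWith C (f i)) ∧
    μH[(k : ℝ)] (E \ ⋃ i, Set.range (f i)) = 0

/-- `K` is contained in a closed cone `C` whose trace on the unit sphere
is `(N-2)`-rectifiable. -/
def InRectCone (N : ℕ) (K : Set (Rn N)) : Prop :=
  ∃ C : Set (Rn N), IsClosed C ∧ K ⊆ C ∧
    (∀ t : ℝ, 0 ≤ t → ∀ x ∈ C, t • x ∈ C) ∧
    KRectifiable N (N - 2) (C ∩ sphere (0 : Rn N) 1)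

/-- The weighted energy `∫_{B_r ∖ K} |∇u(x)|² |x|^{2-N} dx` (as an extended real). -/
def Phi (N : ℕ) (K : Set (Rn N)) (u : Rn N → ℝ) (r : ℝ) : ℝ≥0∞ :=
  ∫⁻ x in ball (0 : Rn N) r \ K,
    ENNReal.ofReal (‖gradient u x‖ ^ 2 * ‖x‖ ^ ((2 : ℝ) - N))

/-!
Test the minimality of `u` in `B_R` with the variation `w u`, where `w` is the Green function
`|x|^(2-N) - R^(2-N)` of `B_R`, truncated to be constant on `B_ε`. The first variation gives
`∫ w |∇u|² = -∫ u ⟨∇u, ∇w⟩`. On the annulus `ε < |x| < R` one has `∇w = -(N-2) |x|^(-N) x`, so in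
polar coordinates the Jacobian cancels and the right-hand side becomes
`(N-2) ∫_S ∫_ε^R u(rθ) ∂ᵣu(rθ) dr dθ`. As `K` lies in a null cone, almost every ray from the
origin misses `K`, and along such a ray the inner integral is
`(u(Rθ)² - u(εθ)²) / 2 ≤ u(Rθ)² / 2`. By Fubini `R` can be chosen with `u(R ·) ∈ L²(S)`, which
bounds `∫ w |∇u|²` independently of `ε`; then `ε → 0`.
-/

/-! ### Null cones -/

/-- `C` is a cone with vertex at the origin: it is invariant under positive dilations. The dilation
factor `0` is excluded, so `C` need not contain its vertex. -/
def IsPosCone {E : Type*} [SMul ℝ E] (C : Set E) : Prop :=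
  ∀ t : ℝ, 0 < t → ∀ x ∈ C, t • x ∈ C

section NullCones

variable {N n k : ℕ}

lemma KRectifiable.dimH_le {A : Set (Rn N)} (hA : KRectifiable N k A) : dimH A ≤ k := by
  obtain ⟨f, hf, hrest⟩ := hA
  have hcover : A ⊆ (A \ ⋃ i, range (f i)) ∪ ⋃ i, range (f i) := by
    rw [sdiff_union_self]; exact subset_union_left
  refine (dimH_mono hcover).trans ?_
  rw [dimH_union, dimH_iUnion]
  refine max_le ?_ (iSup_le fun i => ?_)
  · exact dimH_le_of_hausdorffMeasure_ne_top (d := (k : ℝ≥0)) (by simp [hrest])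
  · obtain ⟨L, hL⟩ := hf i
    calc dimH (range (f i)) ≤ dimH (univ : Set (Rn k)) := hL.dimH_range_le
      _ = k := by rw [Real.dimH_univ_eq_finrank, finrank_euclideanSpace_fin]

/-- Central projection from the origin to the hyperplane `x₀ = c`, in the coordinates
`x₁, …, xₙ` of that hyperplane. Junk on `x₀ = 0`. -/
def centralProjection (n : ℕ) (c : ℝ) (x : Rn (n + 1)) : Fin n → ℝ :=
  fun j => c * x j.succ / x 0

lemma dimH_image_centralProjection_le (c : ℝ) {A : Set (Rn (n + 1))} (hA : ∀ x ∈ A, x 0 ≠ 0) :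
    dimH (centralProjection n c '' A) ≤ dimH A := by
  refine dimH_image_le_of_locally_lipschitzOn fun x hx => ?_
  have hsmooth : ContDiffAt ℝ 1 (centralProjection n c) x :=
    contDiffAt_pi.2 fun j => ContDiffAt.div (by fun_prop) (by fun_prop) (hA x hx)
  obtain ⟨L, t, ht, hL⟩ := hsmooth.exists_lipschitzOnWith
  exact ⟨L, t, mem_nhdsWithin_of_mem_nhds ht, hL⟩

lemma volume_eq_zero_of_ae_slice {A : Set (Rn (n + 1))} (hA : MeasurableSet A)
    (hslice : ∀ᵐ c : ℝ, volume {y : Fin n → ℝ | WithLp.toLp 2 (Fin.cons c y) ∈ A} = 0) :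
    volume A = 0 := by
  have hcons : MeasurePreserving
      (fun p : ℝ × (Fin n → ℝ) => (WithLp.toLp 2 (Fin.cons p.1 p.2) : Rn (n + 1))) := by
    have hpi := (volume_preserving_piFinSuccAbove (fun _ : Fin (n + 1) => ℝ) 0).symm
    have hLp := (EuclideanSpace.volume_preserving_symm_measurableEquiv_toLp (Fin (n + 1))).symm
    simpa [Function.comp_def, Fin.consEquiv] using hLp.comp hpi
  rw [← hcons.measure_preimage hA.nullMeasurableSet, Measure.volume_eq_prod,
    Measure.measure_prod_null (hcons.measurable hA)]
  exact hslice

lemma IsPosCone.slice_subset_image_centralProjection {C : Set (Rn (n + 1))} (hC : IsPosCone C)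
    {c : ℝ} (hc : c ≠ 0) :
    {y : Fin n → ℝ | WithLp.toLp 2 (Fin.cons c y) ∈ C} ⊆
      centralProjection n c '' ((C ∩ sphere 0 1) ∩ {x | x 0 ≠ 0}) := by
  intro y hy
  set z : Rn (n + 1) := WithLp.toLp 2 (Fin.cons c y)
  have hz0 : z 0 = c := rfl
  have hz : 0 < ‖z‖ := norm_pos_iff.2 fun h => hc (by rw [← hz0, h]; rfl)
  refine ⟨‖z‖⁻¹ • z, ⟨⟨hC _ (inv_pos.2 hz) z hy, ?_⟩, ?_⟩, ?_⟩
  · simp [norm_smul, hz.ne']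
  · simp [hz0, hc, hz.ne']
  · ext j
    have hzj : z j.succ = y j := rfl
    simp only [centralProjection, PiLp.smul_apply, smul_eq_mul, hzj, hz0]
    field_simp

lemma IsPosCone.volume_eq_zero {C : Set (Rn (n + 1))} (hC : IsPosCone C) (hCm : MeasurableSet C)
    (hdim : dimH (C ∩ sphere 0 1) < n) : volume C = 0 := by
  refine volume_eq_zero_of_ae_slice hCm ?_
  filter_upwards [Measure.ae_ne volume (0 : ℝ)] with c hc
  refine measure_mono_null (hC.slice_subset_image_centralProjection hc) ?_
  have hdim_image : dimH (centralProjection n c '' ((C ∩ sphere 0 1) ∩ {x | x 0 ≠ 0})) < n :=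
    calc _ ≤ dimH ((C ∩ sphere 0 1) ∩ {x | x 0 ≠ 0}) :=
          dimH_image_centralProjection_le c fun x hx => hx.2
      _ ≤ dimH (C ∩ sphere 0 1) := dimH_mono inter_subset_left
      _ < n := hdim
  have hnull := hausdorffMeasure_of_dimH_lt (d := (n : ℝ≥0)) hdim_image
  rw [← hausdorffMeasure_pi_real]
  simpa using hnull

lemma InRectCone.exists_null_cone {K : Set (Rn N)} (hN : 2 ≤ N) (hK : InRectCone N K) :
    ∃ C, K ⊆ C ∧ IsPosCone C ∧ volume C = 0 := by
  obtain ⟨C, hC, hKC, hcone, hrect⟩ := hK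
  obtain ⟨n, rfl⟩ : ∃ n, N = n + 2 := ⟨N - 2, by omega⟩
  have hpos : IsPosCone C := fun t ht => hcone t ht.le
  refine ⟨C, hKC, hpos, hpos.volume_eq_zero hC.measurableSet (hrect.dimH_le.trans_lt ?_)⟩
  exact_mod_cast Nat.lt_succ_self n

end NullCones

/-! ### Locally Lipschitz functions and gradients -/

section LocallyLipschitz

lemma locLipOn_iff_locallyLipschitzOn {N : ℕ} {u : Rn N → ℝ} {s : Set (Rn N)} :
    LocLipOn N u s ↔ LocallyLipschitzOn s u :=
  forall₂_congr fun _ _ => ⟨fun ⟨t, ht, L, hL⟩ => ⟨L, t, ht, hL⟩,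
    fun ⟨L, t, ht, hL⟩ => ⟨t, ht, L, hL⟩⟩

variable {α : Type*} [PseudoEMetricSpace α] {s : Set α}

lemma locallyLipschitzOn_mul {f g : α → ℝ} (hf : LocallyLipschitzOn s f)
    (hg : LocallyLipschitzOn s g) : LocallyLipschitzOn s fun x => f x * g x := by
  intro x hx
  obtain ⟨Lf, t, ht, hLf⟩ := hf hx
  obtain ⟨Lg, t', ht', hLg⟩ := hg hx
  have hmul : ContDiffAt ℝ 1 (fun p : ℝ × ℝ => p.1 * p.2) (f x, g x) := by fun_prop
  obtain ⟨L, o, ho, hL⟩ := hmul.exists_lipschitzOnWith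
  have hpair : LipschitzOnWith (max Lf Lg) (fun y => (f y, g y)) (t ∩ t') :=
    (hLf.mono inter_subset_left).prodMk (hLg.mono inter_subset_right)
  have hcont : ContinuousWithinAt (fun y => (f y, g y)) s x :=
    (hf.continuousOn x hx).prodMk (hg.continuousOn x hx)
  exact ⟨L * max Lf Lg, (t ∩ t') ∩ (fun y => (f y, g y)) ⁻¹' o,
    inter_mem (inter_mem ht ht') (hcont.preimage_mem_nhdsWithin ho),
    hL.comp (hpair.mono inter_subset_left) fun y hy => hy.2⟩

variable {E F : Type*} [NormedAddCommGroup E] [NormedSpace ℝ E] [FiniteDimensional ℝ E]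
  [MeasurableSpace E] [BorelSpace E] (μ : Measure E) [μ.IsAddHaarMeasure]
  [NormedAddCommGroup F] [NormedSpace ℝ F] [FiniteDimensional ℝ F]

lemma ae_differentiableAt_of_locallyLipschitzOn {f : E → F} {U : Set E} (hU : IsOpen U)
    (hf : LocallyLipschitzOn U f) : ∀ᵐ x ∂μ, x ∈ U → DifferentiableAt ℝ f x := by
  suffices hnull : μ {x | x ∈ U ∧ ¬ DifferentiableAt ℝ f x} = 0 by
    simpa only [ae_iff, Classical.not_imp] using hnull
  refine measure_null_of_locally_null _ fun x ⟨hx, _⟩ => ?_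
  obtain ⟨L, t, ht, hL⟩ := hf hx
  rw [hU.nhdsWithin_eq hx] at ht
  obtain ⟨o, hot, ho, hxo⟩ := _root_.mem_nhds_iff.1 ht
  refine ⟨o ∩ {x | x ∈ U ∧ ¬ DifferentiableAt ℝ f x},
    inter_comm o _ ▸ inter_mem_nhdsWithin _ (ho.mem_nhds hxo), ?_⟩
  refine measure_mono_null ?_ (ae_iff.1 ((hL.mono hot).ae_differentiableWithinAt_of_mem (μ := μ)))
  rintro y ⟨hyo, _, hy⟩ hdiff
  exact hy ((hdiff hyo).differentiableAt (ho.mem_nhds hyo))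

end LocallyLipschitz

section Gradient

variable {E : Type*} [NormedAddCommGroup E] [InnerProductSpace ℝ E] [CompleteSpace E]

lemma norm_gradient_le_of_lipschitz {f : E → ℝ} {L : ℝ≥0} (hf : LipschitzWith L f) (x : E) :
    ‖gradient f x‖ ≤ L :=
  calc ‖gradient f x‖ = ‖fderiv ℝ f x‖ := LinearIsometryEquiv.norm_map _ _
    _ ≤ L := norm_fderiv_le_of_lipschitz ℝ hf

lemma gradient_mul {f g : E → ℝ} {x : E} (hf : DifferentiableAt ℝ f x)
    (hg : DifferentiableAt ℝ g x) :
    gradient (fun y => f y * g y) x = f x • gradient g x + g x • gradient f x := by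
  simp only [gradient, fderiv_fun_mul hf hg, map_add, map_smul]

lemma gradient_add_const_mul {f g : E → ℝ} {x : E} (hf : DifferentiableAt ℝ f x)
    (hg : DifferentiableAt ℝ g x) (t : ℝ) :
    gradient (fun y => f y + t * g y) x = gradient f x + t • gradient g x := by
  simp only [gradient, fderiv_fun_add hf (hg.const_mul t), fderiv_const_mul hg, map_add, map_smul]

lemma measurable_gradient [MeasurableSpace E] [BorelSpace E] (f : E → ℝ) :
    Measurable (gradient f) :=
  (InnerProductSpace.toDual ℝ E).symm.continuous.measurable.comp (measurable_fderiv ℝ f)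

end Gradient

/-! ### Polar coordinates -/

section Polar

lemma ae_of_ae_volumeIoiPow {n : ℕ} {p : ℝ → Prop} (h : ∀ᵐ r ∂Measure.volumeIoiPow n, p r.1) :
    ∀ᵐ r : ℝ, 0 < r → p r := by
  rw [Measure.volumeIoiPow, ae_withDensity_iff (by fun_prop)] at h
  refine (ae_restrict_iff' measurableSet_Ioi).1 ?_
  rw [← map_comap_subtype_coe measurableSet_Ioi,
    (MeasurableEmbedding.subtype_coe measurableSet_Ioi).ae_map_iff]
  filter_upwards [h] with r hr
  exact hr (ENNReal.ofReal_pos.2 (pow_pos r.2 n)).ne'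

lemma integral_volumeIoiPow {F : Type*} [NormedAddCommGroup F] [NormedSpace ℝ F] (n : ℕ)
    (f : ℝ → F) : ∫ r, f r.1 ∂Measure.volumeIoiPow n = ∫ r in Ioi (0 : ℝ), r ^ n • f r := by
  simp only [Measure.volumeIoiPow, ENNReal.ofReal]
  rw [integral_withDensity_eq_integral_smul (measurable_subtype_coe.pow_const _).real_toNNReal,
    integral_subtype_comap measurableSet_Ioi fun r => Real.toNNReal (r ^ n) • f r]
  refine setIntegral_congr_fun measurableSet_Ioi fun r hr => ?_
  simp only [NNReal.smul_def, Real.coe_toNNReal _ (pow_nonneg (mem_Ioi.1 hr).le n)]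

variable {E F : Type*} [NormedAddCommGroup E] [NormedSpace ℝ E] [NormedAddCommGroup F]

lemma norm_smul_sphere {r : ℝ} (hr : 0 ≤ r) (θ : sphere (0 : E) 1) : ‖r • θ.1‖ = r := by
  rw [norm_smul, norm_eq_of_mem_sphere, mul_one, Real.norm_of_nonneg hr]

lemma integral_volumeIoiPow_indicator_norm_preimage [NormedSpace ℝ F] {f : E → F}
    {s : Set ℝ} (n : ℕ) (hs : MeasurableSet s) (hs0 : s ⊆ Ioi 0)
    (θ : sphere (0 : E) 1) :
    ∫ r : Ioi (0 : ℝ), (norm ⁻¹' s).indicator f (r.1 • θ.1) ∂Measure.volumeIoiPow n =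
      ∫ r in s, r ^ n • f (r • θ.1) := by
  rw [integral_volumeIoiPow n fun r => (norm ⁻¹' s).indicator f (r • θ.1),
    ← inter_eq_self_of_subset_right hs0, ← setIntegral_indicator hs]
  refine setIntegral_congr_fun measurableSet_Ioi fun r hr => ?_
  have hmem : r • θ.1 ∈ norm ⁻¹' (Ioi 0 ∩ s) ↔ r ∈ s := by
    rw [mem_preimage, norm_smul_sphere (mem_Ioi.1 hr).le]; exact and_iff_right hr
  by_cases hrs : r ∈ s <;> simp only [indicator, hmem, hrs, if_true, if_false, smul_zero]

variable [MeasurableSpace E] [BorelSpace E]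

lemma measurableEmbedding_polar : MeasurableEmbedding
    fun p : sphere (0 : E) 1 × Ioi (0 : ℝ) => p.2.1 • p.1.1 :=
  (MeasurableEmbedding.subtype_coe (measurableSet_singleton (0 : E)).compl).comp
    (homeomorphUnitSphereProd E).symm.measurableEmbedding

variable [FiniteDimensional ℝ E] [Nontrivial E] (μ : Measure E) [μ.IsAddHaarMeasure]

lemma measurePreserving_polar : MeasurePreserving
    (fun p : sphere (0 : E) 1 × Ioi (0 : ℝ) => p.2.1 • p.1.1)
    (μ.toSphere.prod (Measure.volumeIoiPow (Module.finrank ℝ E - 1))) μ := by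
  have hsymm := MeasurePreserving.symm (homeomorphUnitSphereProd E).toMeasurableEquiv
    μ.measurePreserving_homeomorphUnitSphereProd
  have hcoe := measurePreserving_subtype_coe (μa := μ) (measurableSet_singleton (0 : E)).compl
  rw [restrict_compl_singleton] at hcoe
  exact hcoe.comp hsymm

lemma ae_toSphere_of_ae {p : E → Prop} (h : ∀ᵐ x ∂μ, p x) :
    ∀ᵐ θ ∂μ.toSphere, ∀ᵐ r : ℝ, 0 < r → p (r • θ.1) := by
  filter_upwards [Measure.ae_ae_of_ae_prod
    ((measurePreserving_polar μ).quasiMeasurePreserving.ae h)] with θ hθ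
  exact ae_of_ae_volumeIoiPow (p := fun r => p (r • θ.1)) hθ

lemma IsPosCone.ae_toSphere_smul_notMem {C : Set E} (hC : IsPosCone C) (hμC : μ C = 0) :
    ∀ᵐ θ ∂μ.toSphere, ∀ r : ℝ, 0 < r → r • θ.1 ∉ C := by
  filter_upwards [ae_toSphere_of_ae μ (measure_eq_zero_iff_ae_notMem.1 hμC)] with θ hθ r hr hrC
  have hray : ∀ s : ℝ, 0 < s → s • θ.1 ∈ C := fun s hs => by
    simpa [smul_smul, hr.ne'] using hC (s / r) (by positivity) _ hrC
  have hnull : volume (Ioi (0 : ℝ)) = 0 := measure_mono_null (fun s hs => ?_) (ae_iff.1 hθ)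
  · simp at hnull
  · exact fun h => h hs (hray s hs)

variable {μ}

lemma integrable_comp_polar {f : E → F} (hf : Integrable f μ) :
    Integrable (fun p : sphere (0 : E) 1 × Ioi (0 : ℝ) => f (p.2.1 • p.1.1))
      (μ.toSphere.prod (Measure.volumeIoiPow (Module.finrank ℝ E - 1))) :=
  ((measurePreserving_polar μ).integrable_comp_emb measurableEmbedding_polar).2 hf

lemma exists_integrable_sphere {f : E → F} {s : Set ℝ} (hs : MeasurableSet s) (hs0 : s ⊆ Ioi 0)
    (hvol : volume s ≠ 0) (hf : IntegrableOn f (norm ⁻¹' s) μ) :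
    ∃ r ∈ s, Integrable (fun θ => f (r • θ.1)) μ.toSphere := by
  have hslices := ae_of_ae_volumeIoiPow (p := fun r => Integrable
    (fun θ : sphere (0 : E) 1 => (norm ⁻¹' s).indicator f (r • θ.1)) μ.toSphere)
    (integrable_comp_polar ((integrable_indicator_iff (measurable_norm hs)).2 hf)).prod_left_ae
  obtain ⟨r, hrs, hr⟩ : ∃ r ∈ s, 0 < r → Integrable
      (fun θ : sphere (0 : E) 1 => (norm ⁻¹' s).indicator f (r • θ.1)) μ.toSphere := by
    by_contra! hnot
    refine hvol (measure_mono_null (fun r hr => ?_) (ae_iff.1 hslices))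
    exact fun h => (hnot r hr).2 (h (hs0 hr))
  refine ⟨r, hrs, (hr (hs0 hrs)).congr (.of_forall fun θ => indicator_of_mem ?_ f)⟩
  rwa [mem_preimage, norm_smul_sphere (hs0 hrs).le]

variable [NormedSpace ℝ F] {f : E → F} {s : Set ℝ}

lemma integrable_radial_setIntegral (hs : MeasurableSet s) (hs0 : s ⊆ Ioi 0)
    (hf : IntegrableOn f (norm ⁻¹' s) μ) :
    Integrable (fun θ : sphere (0 : E) 1 => ∫ r in s, r ^ (Module.finrank ℝ E - 1) • f (r • θ.1))
      μ.toSphere := by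
  have hpolar := integrable_comp_polar ((integrable_indicator_iff (measurable_norm hs)).2 hf)
  simpa only [integral_volumeIoiPow_indicator_norm_preimage _ hs hs0] using
    hpolar.integral_prod_left

lemma setIntegral_norm_preimage (hs : MeasurableSet s) (hs0 : s ⊆ Ioi 0)
    (hf : IntegrableOn f (norm ⁻¹' s) μ) :
    ∫ x in norm ⁻¹' s, f x ∂μ =
      ∫ θ : sphere (0 : E) 1, (∫ r in s, r ^ (Module.finrank ℝ E - 1) • f (r • θ.1))
        ∂μ.toSphere := by
  have hms : MeasurableSet (norm ⁻¹' s : Set E) := measurable_norm hs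
  rw [← integral_indicator hms,
    ← (measurePreserving_polar μ).integral_comp measurableEmbedding_polar,
    integral_prod _ (integrable_comp_polar ((integrable_indicator_iff hms).2 hf))]
  simp only [integral_volumeIoiPow_indicator_norm_preimage _ hs hs0]

end Polar

/-! ### Radial integration of `u ∂ᵣu` -/

section Radial

lemma integral_mul_deriv_eq_half_sq_sub_sq {f : ℝ → ℝ} {a b : ℝ} (hab : a ≤ b)
    (hf : LocallyLipschitzOn (Icc a b) f) :
    ∫ r in a..b, f r * deriv f r = (f b ^ 2 - f a ^ 2) / 2 := by
  obtain ⟨L, hL⟩ := hf.exists_lipschitzOnWith_of_compact isCompact_Icc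
  have hac := (uIcc_of_le hab ▸ hL).absolutelyContinuousOnInterval
  have hsq : ∫ r in a..b, 2 * (f r * deriv f r) = f b * f b - f a * f a := by
    rw [← hac.integral_deriv_mul_eq_sub hac]
    congr 1 with r
    ring
  rw [intervalIntegral.integral_const_mul] at hsq
  linarith

lemma locallyLipschitzOn_comp_smul_const {E : Type*} [NormedAddCommGroup E] [NormedSpace ℝ E]
    {u : E → ℝ} {U : Set E} (hu : LocallyLipschitzOn U u) {θ : E} {s : Set ℝ}
    (hs : ∀ r ∈ s, r • θ ∈ U) : LocallyLipschitzOn s fun r : ℝ => u (r • θ) := by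
  intro r hr
  obtain ⟨L, t, ht, hL⟩ := hu (hs r hr)
  have hray : LipschitzWith ‖θ‖₊ fun r : ℝ => r • θ := LipschitzWith.of_dist_le_mul fun a b => by
    rw [dist_eq_norm, dist_eq_norm, ← sub_smul, norm_smul, mul_comm, coe_nnnorm]
  have hcont : ContinuousWithinAt (fun r : ℝ => r • θ) s r := hray.continuous.continuousWithinAt
  exact ⟨L * ‖θ‖₊, (fun r : ℝ => r • θ) ⁻¹' t, hcont.tendsto_nhdsWithin hs ht,
    hL.comp hray.lipschitzOnWith fun _ h => h⟩

variable {E : Type*} [NormedAddCommGroup E] [InnerProductSpace ℝ E] [CompleteSpace E]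
  {u : E → ℝ} {U : Set E}

lemma deriv_comp_smul_const {θ : E} {r : ℝ} (hu : DifferentiableAt ℝ u (r • θ)) :
    deriv (fun r : ℝ => u (r • θ)) r = inner ℝ (gradient u (r • θ)) θ := by
  have hray : HasDerivAt (fun r : ℝ => r • θ) θ r := by
    simpa using (hasDerivAt_id r).smul_const θ
  rw [inner_gradient_left]
  exact (hu.hasFDerivAt.comp_hasDerivAt r hray).deriv

lemma integral_ray_mul_inner_gradient (hu : LocallyLipschitzOn U u) {θ : E} {a b : ℝ}
    (hab : a ≤ b) (hray : ∀ r ∈ Icc a b, r • θ ∈ U)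
    (hdiff : ∀ᵐ r : ℝ, r ∈ Ioc a b → DifferentiableAt ℝ u (r • θ)) :
    ∫ r in a..b, u (r • θ) * inner ℝ (gradient u (r • θ)) θ
      = (u (b • θ) ^ 2 - u (a • θ) ^ 2) / 2 := by
  rw [← integral_mul_deriv_eq_half_sq_sub_sq hab (locallyLipschitzOn_comp_smul_const hu hray)]
  refine intervalIntegral.integral_congr_ae ?_
  filter_upwards [hdiff] with r hr hrab
  rw [deriv_comp_smul_const (hr (uIoc_of_le hab ▸ hrab))]

variable [FiniteDimensional ℝ E] [Nontrivial E] [MeasurableSpace E] [BorelSpace E]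
  {μ : Measure E} [μ.IsAddHaarMeasure] {ε R : ℝ}

/-- The weight `‖x‖^(-dim E)` turns `⟨∇u, x⟩` into `∂ᵣu` divided by the polar Jacobian. -/
lemma ae_toSphere_setIntegral_radial_eq (hU : IsOpen U) (hu : LocallyLipschitzOn U u)
    (hrays : ∀ᵐ θ ∂μ.toSphere, ∀ r : ℝ, 0 < r → r • θ.1 ∈ U) (hε : 0 < ε) (hεR : ε ≤ R) :
    ∀ᵐ θ ∂μ.toSphere, ∫ r in Ioo ε R, r ^ (Module.finrank ℝ E - 1) •
        ((‖r • θ.1‖ ^ Module.finrank ℝ E)⁻¹ * (u (r • θ.1) *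
          inner ℝ (gradient u (r • θ.1)) (r • θ.1))) =
      (u (R • θ.1) ^ 2 - u (ε • θ.1) ^ 2) / 2 := by
  filter_upwards [hrays,
    ae_toSphere_of_ae μ (ae_differentiableAt_of_locallyLipschitzOn μ hU hu)] with θ hθ hdiff
  have hdiff' : ∀ᵐ r : ℝ, r ∈ Ioc ε R → DifferentiableAt ℝ u (r • θ.1) := by
    filter_upwards [hdiff] with r hr hrε
    exact hr (hε.trans hrε.1) (hθ r (hε.trans hrε.1))
  rw [← integral_ray_mul_inner_gradient hu hεR (fun r hr => hθ r (hε.trans_le hr.1)) hdiff',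
    intervalIntegral.integral_of_le hεR, integral_Ioc_eq_integral_Ioo]
  refine setIntegral_congr_fun measurableSet_Ioo fun r hr => ?_
  have hr0 : 0 < r := hε.trans hr.1
  obtain ⟨d, hd⟩ := Nat.exists_eq_succ_of_ne_zero (Module.finrank_pos (R := ℝ) (M := E)).ne'
  simp only [hd, Nat.succ_eq_add_one, Nat.add_sub_cancel, norm_smul_sphere hr0.le,
    inner_smul_right, smul_eq_mul]
  field_simp
  ring

lemma setIntegral_annulus_mul_inner_gradient_le (hU : IsOpen U) (hu : LocallyLipschitzOn U u)
    (hrays : ∀ᵐ θ ∂μ.toSphere, ∀ r : ℝ, 0 < r → r • θ.1 ∈ U) (hε : 0 < ε) (hεR : ε ≤ R)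
    (hint : IntegrableOn (fun x => (‖x‖ ^ Module.finrank ℝ E)⁻¹ *
      (u x * inner ℝ (gradient u x) x)) (norm ⁻¹' Ioo ε R) μ)
    (hsphere : Integrable (fun θ => u (R • θ.1) ^ 2) μ.toSphere) :
    ∫ x in norm ⁻¹' Ioo ε R, (‖x‖ ^ Module.finrank ℝ E)⁻¹ * (u x * inner ℝ (gradient u x) x) ∂μ ≤
      (∫ θ, u (R • θ.1) ^ 2 ∂μ.toSphere) / 2 := by
  have hpos : Ioo ε R ⊆ Ioi 0 := fun r hr => hε.trans hr.1
  rw [setIntegral_norm_preimage measurableSet_Ioo hpos hint, ← integral_div]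
  refine integral_mono_ae (integrable_radial_setIntegral measurableSet_Ioo hpos hint)
    (hsphere.div_const 2) ?_
  filter_upwards [ae_toSphere_setIntegral_radial_eq hU hu hrays hε hεR] with θ hθ
  rw [hθ]
  gcongr
  exact sub_le_self _ (sq_nonneg _)

end Radial

/-! ### The truncated Green function -/

section TruncatedGreen

variable {E : Type*} [NormedAddCommGroup E]

/-- The function `‖x‖^(-k) - R^(-k)`, truncated to be constant on `‖x‖ ≤ ε` and to vanish on
`R ≤ ‖x‖`. For `k = dim E - 2` this is, up to a constant factor, the truncation of the Green
function of the ball of radius `R` with pole at the origin. -/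
def truncatedGreen (k : ℕ) (ε R : ℝ) (x : E) : ℝ := (min (max ‖x‖ ε) R ^ k)⁻¹ - (R ^ k)⁻¹

variable {k : ℕ} {ε R : ℝ}

lemma exists_lipschitzWith_truncatedGreen (hε : 0 < ε) (hεR : ε ≤ R) :
    ∃ L, LipschitzWith L (truncatedGreen k ε R : E → ℝ) := by
  have hprofile : ContDiffOn ℝ 1 (fun t : ℝ => (t ^ k)⁻¹ - (R ^ k)⁻¹) (Icc ε R) :=
    ((by fun_prop : ContDiffOn ℝ 1 (fun t : ℝ => t ^ k) (Icc ε R)).inv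
      fun t ht => pow_ne_zero _ (hε.trans_le ht.1).ne').sub contDiffOn_const
  obtain ⟨L, hL⟩ := hprofile.exists_lipschitzOnWith (by decide) (convex_Icc _ _) isCompact_Icc
  have hclamp : LipschitzWith 1 fun x : E => min (max ‖x‖ ε) R :=
    (lipschitzWith_one_norm.max_const ε).min_const R
  exact ⟨L * 1, lipschitzOnWith_univ.1 <| hL.comp hclamp.lipschitzOnWith fun x _ =>
    ⟨le_min (le_max_right _ _) hεR, min_le_right _ _⟩⟩

lemma truncatedGreen_nonneg (hε : 0 < ε) (hεR : ε ≤ R) (x : E) : 0 ≤ truncatedGreen k ε R x := by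
  have hpos : 0 < min (max ‖x‖ ε) R := lt_min (hε.trans_le (le_max_right _ _)) (hε.trans_le hεR)
  rw [truncatedGreen, sub_nonneg]
  gcongr
  exact min_le_right _ _

lemma truncatedGreen_eq_zero {x : E} (hx : R ≤ ‖x‖) : truncatedGreen k ε R x = 0 := by
  rw [truncatedGreen, min_eq_right (hx.trans (le_max_left _ _)), sub_self]

lemma truncatedGreen_eq_of_norm_le {x : E} (hx : ‖x‖ ≤ ε) (hεR : ε ≤ R) :
    truncatedGreen k ε R x = (ε ^ k)⁻¹ - (R ^ k)⁻¹ := by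
  rw [truncatedGreen, max_eq_right hx, min_eq_left hεR]

lemma truncatedGreen_eq_of_le_norm {x : E} (hεx : ε ≤ ‖x‖) (hxR : ‖x‖ ≤ R) :
    truncatedGreen k ε R x = (‖x‖ ^ k)⁻¹ - (R ^ k)⁻¹ := by
  rw [truncatedGreen, max_eq_left hεx, min_eq_left hxR]

variable [InnerProductSpace ℝ E]

lemma hasFDerivAt_norm_of_ne_zero {x : E} (hx : x ≠ 0) :
    HasFDerivAt (fun y : E => ‖y‖) (‖x‖⁻¹ • innerSL ℝ x) x := by
  have hsqrt := (hasStrictFDerivAt_norm_sq x).hasFDerivAt.sqrt (by positivity)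
  simp only [Real.sqrt_sq (norm_nonneg _)] at hsqrt
  convert! hsqrt using 1
  rw [← Nat.cast_smul_eq_nsmul ℝ, smul_smul]
  congr 1
  field_simp
  norm_num

variable [CompleteSpace E]

lemma gradient_comp_norm {h : ℝ → ℝ} {h' : ℝ} {x : E} (hx : x ≠ 0) (hh : HasDerivAt h h' ‖x‖) :
    gradient (fun y => h ‖y‖) x = (h' * ‖x‖⁻¹) • x := by
  refine HasGradientAt.gradient (hasGradientAt_iff_hasFDerivAt.2 ?_)
  convert! hh.comp_hasFDerivAt x (hasFDerivAt_norm_of_ne_zero hx) using 1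
  rw [smul_smul, map_smul]
  rfl

lemma gradient_truncatedGreen_of_norm_lt {x : E} (hx : ‖x‖ < ε) (hεR : ε ≤ R) :
    gradient (truncatedGreen k ε R) x = 0 := by
  have hconst : truncatedGreen k ε R =ᶠ[𝓝 x] fun _ => (ε ^ k)⁻¹ - (R ^ k)⁻¹ := by
    filter_upwards [(isOpen_lt continuous_norm continuous_const).mem_nhds hx] with y hy
    exact truncatedGreen_eq_of_norm_le hy.le hεR
  rw [hconst.gradient_eq]
  exact (hasGradientAt_const x _).gradient

lemma gradient_truncatedGreen_of_lt_norm {x : E} (hε : 0 < ε) (hεx : ε < ‖x‖) (hxR : ‖x‖ < R) :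
    gradient (truncatedGreen k ε R) x = (-(k : ℝ) * (‖x‖ ^ (k + 2))⁻¹) • x := by
  have hpos : 0 < ‖x‖ := hε.trans hεx
  have hradial : truncatedGreen k ε R =ᶠ[𝓝 x] fun y => (‖y‖ ^ k)⁻¹ - (R ^ k)⁻¹ := by
    filter_upwards [(isOpen_lt continuous_norm continuous_const).mem_nhds hxR,
      (isOpen_lt continuous_const continuous_norm).mem_nhds hεx] with y hyR hεy
    exact truncatedGreen_eq_of_le_norm hεy.le hyR.le
  have hprofile : HasDerivAt (fun t : ℝ => (t ^ k)⁻¹ - (R ^ k)⁻¹)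
      (-(k : ℝ) * (‖x‖ ^ (k + 1))⁻¹) ‖x‖ := by
    convert! ((hasDerivAt_pow k ‖x‖).inv (pow_ne_zero _ hpos.ne')).sub_const ((R ^ k)⁻¹) using 1
    rcases k with _ | k
    · simp
    · rw [Nat.add_sub_cancel]
      field_simp
      ring
  rw [hradial.gradient_eq, gradient_comp_norm (norm_pos_iff.1 hpos) hprofile]
  congr 1
  field_simp
  ring

end TruncatedGreen

/-! ### The first variation of the energy -/

section FirstVariation

section L2

variable {α F : Type*} [MeasurableSpace α] {μ : Measure α} [NormedAddCommGroup F]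
  [InnerProductSpace ℝ F] {f g : α → F}

lemma integrable_inner_of_memLp_two (hf : MemLp f 2 μ) (hg : MemLp g 2 μ) :
    Integrable (fun x => inner ℝ (f x) (g x)) μ :=
  (hf.norm.integrable_mul hg.norm).mono' (hf.1.inner hg.1)
    (.of_forall fun x => norm_inner_le_norm (f x) (g x))

lemma integral_norm_add_smul_sq (hf : MemLp f 2 μ) (hg : MemLp g 2 μ) (t : ℝ) :
    ∫ x, ‖f x + t • g x‖ ^ 2 ∂μ =
      ∫ x, ‖f x‖ ^ 2 ∂μ + 2 * t * ∫ x, inner ℝ (f x) (g x) ∂μ + t ^ 2 * ∫ x, ‖g x‖ ^ 2 ∂μ := by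
  have hff := (memLp_two_iff_integrable_sq_norm hf.1).1 hf
  have hgg := (memLp_two_iff_integrable_sq_norm hg.1).1 hg
  have hfg := integrable_inner_of_memLp_two hf hg
  rw [← integral_const_mul, ← integral_const_mul, ← integral_add hff (hfg.const_mul _),
    ← integral_add (hff.fun_add (hfg.const_mul _)) (hgg.const_mul _)]
  congr 1 with x
  rw [norm_add_sq_real, inner_smul_right, norm_smul, mul_pow, Real.norm_eq_abs, sq_abs]
  ring

end L2

lemma eq_zero_of_forall_nonneg_linear_add_sq {a b : ℝ}
    (h : ∀ t : ℝ, 0 ≤ 2 * t * a + t ^ 2 * b) : a = 0 := by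
  have hdiscrim : discrim b (2 * a) 0 ≤ 0 := discrim_le_zero fun t => by linarith [h t]
  rw [discrim] at hdiscrim
  nlinarith [sq_nonneg a]

variable {N : ℕ} {K : Set (Rn N)} {u w φ : Rn N → ℝ} {R : ℝ} {L : ℝ≥0}

lemma LocMin.locallyLipschitzOn (hu : LocMin N K u) : LocallyLipschitzOn Kᶜ u :=
  locLipOn_iff_locallyLipschitzOn.1 hu.1

lemma LocMin.aestronglyMeasurable (hu : LocMin N K u) (hK : IsClosed K) :
    AEStronglyMeasurable u (volume.restrict (ball 0 R \ K)) :=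
  (hu.locallyLipschitzOn.continuousOn.mono fun _ hx => hx.2).aestronglyMeasurable
    (measurableSet_ball.diff hK.measurableSet)

lemma LocMin.memLp (hu : LocMin N K u) (hK : IsClosed K) (hR : 0 < R) :
    MemLp u 2 (volume.restrict (ball 0 R \ K)) := by
  rw [memLp_two_iff_integrable_sq (hu.aestronglyMeasurable hK)]
  refine (hu.2.1 R hR).mono' ((hu.aestronglyMeasurable hK).pow 2) (.of_forall fun x => ?_)
  rw [Real.norm_of_nonneg (sq_nonneg _)]
  exact le_add_of_nonneg_right (sq_nonneg _)

lemma LocMin.memLp_gradient (hu : LocMin N K u) (hR : 0 < R) :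
    MemLp (gradient u) 2 (volume.restrict (ball 0 R \ K)) := by
  have hmeas := measurable_gradient u
  rw [memLp_two_iff_integrable_sq_norm hmeas.aestronglyMeasurable]
  refine (hu.2.1 R hR).mono' (hmeas.norm.pow_const 2).aestronglyMeasurable
    (.of_forall fun x => ?_)
  rw [Real.norm_of_nonneg (sq_nonneg _)]
  exact le_add_of_nonneg_left (sq_nonneg _)

lemma LocMin.integral_inner_gradient_eq_zero (hu : LocMin N K u) (hK : IsClosed K) (hR : 0 < R)
    (hφ : LocallyLipschitzOn Kᶜ φ) (hφ2 : MemLp (gradient φ) 2 (volume.restrict (ball 0 R \ K)))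
    (hφ0 : ∀ x, x ∉ ball 0 R ∪ K → φ x = 0) :
    ∫ x in ball 0 R \ K, inner ℝ (gradient u x) (gradient φ x) = 0 := by
  refine eq_zero_of_forall_nonneg_linear_add_sq
    (b := ∫ x in ball 0 R \ K, ‖gradient φ x‖ ^ 2) fun t => ?_
  have hgrad : ∀ᵐ x ∂volume.restrict (ball 0 R \ K),
      gradient (fun y => u y + t * φ y) x = gradient u x + t • gradient φ x := by
    refine (ae_restrict_iff' (measurableSet_ball.diff hK.measurableSet)).2 ?_
    filter_upwards [ae_differentiableAt_of_locallyLipschitzOn volume hK.isOpen_compl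
      hu.locallyLipschitzOn, ae_differentiableAt_of_locallyLipschitzOn volume hK.isOpen_compl hφ]
      with x hux hφx hx
    exact gradient_add_const_mul (hux hx.2) (hφx hx.2) t
  have hgrad_sq : (fun x => ‖gradient (fun y => u y + t * φ y) x‖ ^ 2)
      =ᵐ[volume.restrict (ball 0 R \ K)] fun x => ‖gradient u x + t • gradient φ x‖ ^ 2 :=
    hgrad.mono fun x hx => congrArg (‖·‖ ^ 2) hx
  have hcompetitor_memLp := (hu.memLp_gradient hR).add (hφ2.const_smul t)
  have hmin := hu.2.2 R hR (fun y => u y + t * φ y)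
    (locLipOn_iff_locallyLipschitzOn.2 (hu.locallyLipschitzOn.add
      (locallyLipschitzOn_mul (LocallyLipschitz.const t).locallyLipschitzOn hφ)))
    (((memLp_two_iff_integrable_sq_norm hcompetitor_memLp.1).1 hcompetitor_memLp).congr
      hgrad_sq.symm)
    fun x hx => by rw [hφ0 x hx, mul_zero, add_zero]
  rw [integral_congr_ae hgrad_sq,
    integral_norm_add_smul_sq (hu.memLp_gradient hR) hφ2] at hmin
  linarith

lemma LocMin.memLp_smul_gradient (hu : LocMin N K u) (hK : IsClosed K) (hR : 0 < R)
    (hw : LipschitzWith L w) :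
    MemLp (fun x => w x • gradient u x) 2 (volume.restrict (ball 0 R \ K)) := by
  refine (hu.memLp_gradient hR).of_le_mul (c := |w 0| + L * R)
    (hw.continuous.aestronglyMeasurable.smul (measurable_gradient u).aestronglyMeasurable) ?_
  refine (ae_restrict_iff' (measurableSet_ball.diff hK.measurableSet)).2 (.of_forall fun x hx => ?_)
  have hdist : |w x - w 0| ≤ L * ‖x‖ := by simpa [Real.dist_eq] using hw.dist_le_mul x 0
  have hwx : |w x| ≤ |w 0| + L * R :=
    calc |w x| ≤ |w 0| + |w x - w 0| := by simpa using abs_add_le (w 0) (w x - w 0)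
      _ ≤ |w 0| + L * R := by
        gcongr
        exact hdist.trans (mul_le_mul_of_nonneg_left (mem_ball_zero_iff.1 hx.1).le L.2)
  rw [norm_smul, Real.norm_eq_abs]
  gcongr

lemma LocMin.memLp_smul_gradient_cutoff (hu : LocMin N K u) (hK : IsClosed K) (hR : 0 < R)
    (hw : LipschitzWith L w) :
    MemLp (fun x => u x • gradient w x) 2 (volume.restrict (ball 0 R \ K)) := by
  refine (hu.memLp hK hR).of_le_mul (c := L)
    ((hu.aestronglyMeasurable hK).smul (measurable_gradient w).aestronglyMeasurable)
    (.of_forall fun x => ?_)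
  rw [norm_smul, mul_comm]
  gcongr
  exact norm_gradient_le_of_lipschitz hw x

lemma LocMin.integrableOn_mul_norm_gradient_sq (hu : LocMin N K u) (hK : IsClosed K) (hR : 0 < R)
    (hw : LipschitzWith L w) :
    IntegrableOn (fun x => w x * ‖gradient u x‖ ^ 2) (ball 0 R \ K) := by
  simpa only [IntegrableOn, inner_smul_right, real_inner_self_eq_norm_sq] using
    integrable_inner_of_memLp_two (hu.memLp_gradient hR) (hu.memLp_smul_gradient hK hR hw)

lemma LocMin.integrableOn_mul_inner_gradient (hu : LocMin N K u) (hK : IsClosed K) (hR : 0 < R)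
    (hw : LipschitzWith L w) :
    IntegrableOn (fun x => u x * inner ℝ (gradient u x) (gradient w x)) (ball 0 R \ K) := by
  simpa only [IntegrableOn, inner_smul_right] using
    integrable_inner_of_memLp_two (hu.memLp_gradient hR) (hu.memLp_smul_gradient_cutoff hK hR hw)

lemma LocMin.integral_mul_norm_gradient_sq (hu : LocMin N K u) (hK : IsClosed K) (hR : 0 < R)
    (hw : LipschitzWith L w) (hw0 : ∀ x, R ≤ ‖x‖ → w x = 0) :
    ∫ x in ball 0 R \ K, w x * ‖gradient u x‖ ^ 2 =
      -∫ x in ball 0 R \ K, u x * inner ℝ (gradient u x) (gradient w x) := by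
  have hgrad : ∀ᵐ x ∂volume.restrict (ball 0 R \ K),
      gradient (fun y => w y * u y) x = w x • gradient u x + u x • gradient w x := by
    refine (ae_restrict_iff' (measurableSet_ball.diff hK.measurableSet)).2 ?_
    filter_upwards [ae_differentiableAt_of_locallyLipschitzOn volume hK.isOpen_compl
      hu.locallyLipschitzOn, hw.ae_differentiableAt (μ := volume)] with x hux hwx hx
    exact gradient_mul hwx (hux hx.2)
  have hvariation := hu.integral_inner_gradient_eq_zero hK hR
    (locallyLipschitzOn_mul hw.locallyLipschitz.locallyLipschitzOn hu.locallyLipschitzOn)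
    (((hu.memLp_smul_gradient hK hR hw).add (hu.memLp_smul_gradient_cutoff hK hR hw)).ae_eq
      (.symm hgrad))
    fun x hx => by
      rw [hw0 x (not_lt.1 fun h => hx (.inl (mem_ball_zero_iff.2 h))), zero_mul]
  rw [eq_neg_iff_add_eq_zero, ← integral_add (hu.integrableOn_mul_norm_gradient_sq hK hR hw)
    (hu.integrableOn_mul_inner_gradient hK hR hw), ← hvariation]
  refine integral_congr_ae (hgrad.mono fun x hx => ?_)
  simp only [hx, inner_add_right, inner_smul_right, real_inner_self_eq_norm_sq]

end FirstVariation

/-! ### The weighted energy bound -/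

section WeightedEnergy

section Annulus

lemma norm_preimage_Ioo_subset_ball {E : Type*} [SeminormedAddCommGroup E] {ε R : ℝ} :
    norm ⁻¹' Ioo ε R ⊆ ball (0 : E) R :=
  fun _ hx => mem_ball_zero_iff.2 hx.2

variable {E : Type*} [NormedAddCommGroup E] [InnerProductSpace ℝ E] [MeasurableSpace E]
  [BorelSpace E] {μ : Measure E} {V : E → E} {ε R : ℝ}

lemma integrableOn_annulus_inv_norm_pow_mul_inner [FiniteDimensional ℝ E] (k : ℕ) (hε : 0 < ε)
    (hV : IntegrableOn V (norm ⁻¹' Ioo ε R) μ) :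
    IntegrableOn (fun x => (‖x‖ ^ (k + 1))⁻¹ * inner ℝ (V x) x) (norm ⁻¹' Ioo ε R) μ := by
  refine (hV.norm.const_mul (ε ^ k)⁻¹).mono'
    ((by fun_prop : Measurable fun x : E => (‖x‖ ^ (k + 1))⁻¹).aestronglyMeasurable.mul
      (hV.1.inner aestronglyMeasurable_id)) ?_
  refine (ae_restrict_iff' (measurable_norm measurableSet_Ioo)).2 (.of_forall fun x hx => ?_)
  have hx0 : 0 < ‖x‖ := hε.trans hx.1
  calc ‖(‖x‖ ^ (k + 1))⁻¹ * inner ℝ (V x) x‖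
      ≤ (‖x‖ ^ (k + 1))⁻¹ * (‖V x‖ * ‖x‖) := by
        rw [norm_mul, Real.norm_of_nonneg (by positivity)]
        gcongr
        exact norm_inner_le_norm _ _
    _ = (‖x‖ ^ k)⁻¹ * ‖V x‖ := by field_simp; ring
    _ ≤ (ε ^ k)⁻¹ * ‖V x‖ := by
        gcongr
        exact hx.1.le

lemma setIntegral_ball_inner_gradient_truncatedGreen [CompleteSpace E] {k : ℕ} (hε : 0 < ε)
    (hεR : ε ≤ R) (hsphere : μ (sphere 0 ε) = 0) :
    ∫ x in ball 0 R, inner ℝ (V x) (gradient (truncatedGreen k ε R) x) ∂μ =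
      -(k * ∫ x in norm ⁻¹' Ioo ε R, (‖x‖ ^ (k + 2))⁻¹ * inner ℝ (V x) x ∂μ) := by
  have hinner : ∀ᵐ x ∂μ, x ∈ ball 0 R \ norm ⁻¹' Ioo ε R →
      inner ℝ (V x) (gradient (truncatedGreen k ε R) x) = 0 := by
    filter_upwards [measure_eq_zero_iff_ae_notMem.1 hsphere] with x hxε hx
    have hle : ‖x‖ ≤ ε := not_lt.1 fun h => hx.2 ⟨h, mem_ball_zero_iff.1 hx.1⟩
    have hlt : ‖x‖ < ε := hle.lt_of_ne fun h => hxε (mem_sphere_zero_iff_norm.2 h)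
    rw [gradient_truncatedGreen_of_norm_lt hlt hεR, inner_zero_right]
  rw [setIntegral_eq_of_subset_of_ae_sdiff_eq_zero measurableSet_ball.nullMeasurableSet
    norm_preimage_Ioo_subset_ball hinner, ← neg_mul, ← integral_const_mul]
  refine setIntegral_congr_fun (measurable_norm measurableSet_Ioo) fun x hx => ?_
  simp only [gradient_truncatedGreen_of_lt_norm hε hx.1 hx.2, inner_smul_right, mul_assoc]

end Annulus

variable {k : ℕ} {K : Set (Rn (k + 2))} {u : Rn (k + 2) → ℝ} {ε R : ℝ}

lemma LocMin.integral_truncatedGreen_mul_norm_gradient_sq_le (hu : LocMin (k + 2) K u)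
    (hK : IsClosed K) (hK0 : volume K = 0)
    (hrays : ∀ᵐ θ ∂(volume : Measure (Rn (k + 2))).toSphere, ∀ r : ℝ, 0 < r → r • θ.1 ∈ Kᶜ)
    (hε : 0 < ε) (hεR : ε ≤ R)
    (hsphere : Integrable (fun θ => u (R • θ.1) ^ 2) (volume : Measure (Rn (k + 2))).toSphere) :
    ∫ x in ball 0 R \ K, truncatedGreen k ε R x * ‖gradient u x‖ ^ 2 ≤
      k * ((∫ θ, u (R • θ.1) ^ 2 ∂(volume : Measure (Rn (k + 2))).toSphere) / 2) := by
  have hR : 0 < R := hε.trans_le hεR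
  obtain ⟨L, hL⟩ := exists_lipschitzWith_truncatedGreen (E := Rn (k + 2)) (k := k) hε hεR
  have hball : (ball 0 R \ K : Set (Rn (k + 2))) =ᵐ[volume] ball 0 R := sdiff_null_ae_eq_self hK0
  have hV : IntegrableOn (fun x => u x • gradient u x) (norm ⁻¹' Ioo ε R) :=
    (IntegrableOn.congr_set_ae (memLp_one_iff_integrable.1
      ((hu.memLp_gradient hR).smul (hu.memLp hK hR))) hball.symm).mono_set
      norm_preimage_Ioo_subset_ball
  have hannulus := setIntegral_annulus_mul_inner_gradient_le hK.isOpen_compl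
    hu.locallyLipschitzOn hrays hε hεR
    (by simpa only [finrank_euclideanSpace_fin, real_inner_smul_left] using
      integrableOn_annulus_inv_norm_pow_mul_inner (k + 1) hε hV) hsphere
  have hgreen := setIntegral_ball_inner_gradient_truncatedGreen (μ := volume) (k := k)
    (V := fun x => u x • gradient u x) hε hεR (Measure.addHaar_sphere _ _ _)
  simp only [real_inner_smul_left] at hgreen
  rw [finrank_euclideanSpace_fin] at hannulus
  rw [hu.integral_mul_norm_gradient_sq hK hR hL fun x => truncatedGreen_eq_zero,
    setIntegral_congr_set hball, hgreen, neg_neg]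
  gcongr

lemma setLIntegral_le_of_forall_lt_norm {E : Type*} [NormedAddCommGroup E] [MeasurableSpace E]
    {μ : Measure E} [NullSingletonClass μ] {f : E → ℝ≥0∞} {s : Set E} {c : ℝ≥0∞}
    (h : ∀ ε : ℝ, 0 < ε → ∫⁻ x in s ∩ {x | ε < ‖x‖}, f x ∂μ ≤ c) : ∫⁻ x in s, f x ∂μ ≤ c := by
  have hdirected : Directed (· ⊆ ·) fun n : ℕ => s ∩ {x : E | 1 / ((n : ℝ) + 1) < ‖x‖} :=
    Monotone.directed_le fun m n hmn => inter_subset_inter_right s fun x hx =>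
      lt_of_le_of_lt (α := ℝ) (Nat.one_div_le_one_div hmn) hx
  have hunion : s \ {0} ⊆ ⋃ n : ℕ, s ∩ {x : E | 1 / ((n : ℝ) + 1) < ‖x‖} := fun x hx =>
    let ⟨n, hn⟩ := exists_nat_one_div_lt (norm_pos_iff.2 hx.2)
    mem_iUnion.2 ⟨n, hx.1, hn⟩
  calc ∫⁻ x in s, f x ∂μ = ∫⁻ x in s \ {0}, f x ∂μ :=
        (setLIntegral_congr (sdiff_null_ae_eq_self (measure_singleton 0))).symm
    _ ≤ ∫⁻ x in ⋃ n : ℕ, s ∩ {x : E | 1 / ((n : ℝ) + 1) < ‖x‖}, f x ∂μ := lintegral_mono_set hunion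
    _ = ⨆ n : ℕ, ∫⁻ x in s ∩ {x : E | 1 / ((n : ℝ) + 1) < ‖x‖}, f x ∂μ :=
        setLIntegral_iUnion_of_directed f hdirected
    _ ≤ c := iSup_le fun n => h _ Nat.one_div_pos_of_nat

lemma LocMin.setLIntegral_lt_norm_le (hu : LocMin (k + 2) K u) (hK : IsClosed K)
    (hε : 0 < ε) (hεR : ε ≤ R) :
    ∫⁻ x in (ball 0 R \ K) ∩ {x | ε < ‖x‖},
        ENNReal.ofReal (‖gradient u x‖ ^ 2 * ‖x‖ ^ ((2 : ℝ) - (k + 2 : ℕ))) ≤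
      ENNReal.ofReal ((∫ x in ball 0 R \ K, truncatedGreen k ε R x * ‖gradient u x‖ ^ 2) +
        (R ^ k)⁻¹ * ∫ x in ball 0 R \ K, ‖gradient u x‖ ^ 2) := by
  have hR : 0 < R := hε.trans_le hεR
  have hms : MeasurableSet (ball 0 R \ K) := measurableSet_ball.diff hK.measurableSet
  obtain ⟨L, hL⟩ := exists_lipschitzWith_truncatedGreen (E := Rn (k + 2)) (k := k) hε hεR
  have hgreen := hu.integrableOn_mul_norm_gradient_sq hK hR hL
  have henergy : IntegrableOn (fun x => (R ^ k)⁻¹ * ‖gradient u x‖ ^ 2) (ball 0 R \ K) :=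
    ((memLp_two_iff_integrable_sq_norm (hu.memLp_gradient hR).1).1
      (hu.memLp_gradient hR)).const_mul _
  rw [← integral_const_mul, ← integral_add hgreen henergy,
    ofReal_integral_eq_lintegral_ofReal (Integrable.fun_add hgreen henergy) (.of_forall fun x =>
      add_nonneg (mul_nonneg (truncatedGreen_nonneg hε hεR x) (sq_nonneg _)) (by positivity))]
  refine (setLIntegral_mono' (hms.inter (measurableSet_lt measurable_const measurable_norm))
    fun x hx => ?_).trans (lintegral_mono_set inter_subset_left)
  have hx0 : 0 < ‖x‖ := hε.trans hx.2
  have hexp : (2 : ℝ) - (k + 2 : ℕ) = -(k : ℝ) := by push_cast; ring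
  rw [truncatedGreen_eq_of_le_norm (le_of_lt hx.2) (mem_ball_zero_iff.1 hx.1.1).le, hexp,
    Real.rpow_neg hx0.le, Real.rpow_natCast]
  exact (congrArg ENNReal.ofReal (by ring)).le

lemma LocMin.exists_integrable_sphere_sq (hu : LocMin (k + 2) K u) (hK : IsClosed K)
    (hK0 : volume K = 0) {a : ℝ} (ha : 0 ≤ a) :
    ∃ R > a, Integrable (fun θ => u (R • θ.1) ^ 2) (volume : Measure (Rn (k + 2))).toSphere := by
  have hsq : IntegrableOn (fun x => u x ^ 2) (ball 0 (a + 1)) :=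
    IntegrableOn.congr_set_ae (hu.memLp hK (by positivity)).integrable_sq
      (sdiff_null_ae_eq_self hK0).symm
  obtain ⟨R, hR, hint⟩ := exists_integrable_sphere (s := Ioo a (a + 1)) measurableSet_Ioo
    (fun r hr => ha.trans_lt hr.1) (by simp) (hsq.mono_set norm_preimage_Ioo_subset_ball)
  exact ⟨R, hR.1, hint⟩

lemma LocMin.Phi_le (hu : LocMin (k + 2) K u) (hK : IsClosed K) (hK0 : volume K = 0)
    (hrays : ∀ᵐ θ ∂(volume : Measure (Rn (k + 2))).toSphere, ∀ s : ℝ, 0 < s → s • θ.1 ∈ Kᶜ)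
    (hR : 0 < R)
    (hsphere : Integrable (fun θ => u (R • θ.1) ^ 2) (volume : Measure (Rn (k + 2))).toSphere) :
    Phi (k + 2) K u R ≤
      ENNReal.ofReal (k * ((∫ θ, u (R • θ.1) ^ 2 ∂(volume : Measure (Rn (k + 2))).toSphere) / 2) +
        (R ^ k)⁻¹ * ∫ x in ball 0 R \ K, ‖gradient u x‖ ^ 2) := by
  refine setLIntegral_le_of_forall_lt_norm fun ε hε => ?_
  have hδ : 0 < min ε R := lt_min hε hR
  have hδR : min ε R ≤ R := min_le_right ε R
  have hsubset : (ball 0 R \ K) ∩ {x | ε < ‖x‖} ⊆ (ball 0 R \ K) ∩ {x | min ε R < ‖x‖} :=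
    inter_subset_inter_right _ fun x hx => (min_le_left ε R).trans_lt hx
  refine (lintegral_mono_set hsubset).trans
    ((hu.setLIntegral_lt_norm_le hK hδ hδR).trans (ENNReal.ofReal_le_ofReal ?_))
  gcongr
  exact hu.integral_truncatedGreen_mul_norm_gradient_sq_le hK hK0 hrays hδ hδR hsphere

end WeightedEnergy

theorem statement15_general {N : ℕ} (hN : 2 ≤ N) {K C : Set (Rn N)} (hK : IsClosed K)
    (hKC : K ⊆ C) (hC : IsPosCone C) (hC0 : volume C = 0) {u : Rn N → ℝ} (hu : LocMin N K u)
    (r : ℝ) : Phi N K u r < ⊤ := by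
  obtain ⟨k, rfl⟩ : ∃ k, N = k + 2 := ⟨N - 2, by omega⟩
  have hK0 : volume K = 0 := measure_mono_null hKC hC0
  have hrays : ∀ᵐ θ ∂(volume : Measure (Rn (k + 2))).toSphere, ∀ s : ℝ, 0 < s → s • θ.1 ∈ Kᶜ :=
    (hC.ae_toSphere_smul_notMem volume hC0).mono fun θ hθ s hs hsK => hθ s hs (hKC hsK)
  obtain ⟨R, hrR, hsphere⟩ := hu.exists_integrable_sphere_sq hK hK0 (abs_nonneg r)
  have hR : 0 < R := (abs_nonneg r).trans_lt hrR
  have hball : ball (0 : Rn (k + 2)) r \ K ⊆ ball 0 R \ K :=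
    sdiff_subset_sdiff_left (ball_subset_ball ((le_abs_self r).trans hrR.le))
  calc Phi (k + 2) K u r ≤ Phi (k + 2) K u R := lintegral_mono_set hball
    _ ≤ ENNReal.ofReal _ := hu.Phi_le hK hK0 hrays hR hsphere
    _ < ⊤ := ENNReal.ofReal_lt_top

/-- improved integrability near the origin. Let `N ≥ 3` and let `K`
be a closed set satisfying condition (T) and contained in a rectifiable cone. Then every
local energy minimizer `u` in `ℝ^N ∖ K` satisfies
`∫_{B_1 ∖ K} |∇u(x)|² |x|^{2-N} dx < ∞`. -/
theorem statement15 {N : ℕ} (hN : 3 ≤ N) (K : Set (Rn N)) (hK : IsClosed K)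
    (hT : CondT N K) (hcone : InRectCone N K)
    (u : Rn N → ℝ) (hu : LocMin N K u) :
    Phi N K u 1 < ⊤ := by
  obtain ⟨C, hKC, hC, hC0⟩ := hcone.exists_null_cone (by omega)
  exact statement15_general (by omega) hK hKC hC hC0 hu 1
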